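/- arXiv:1605.09541 — 2 statements merged into one kernel-verified Lean document; each statement's English description precedes it below -/
import Mathlib

section
/- For every real number θ with 0 < |θ| < 2π, the Clausen function satisfies Cl₂(θ)/θ = 1 − log|θ| + Σ_{n=1}^{∞} ζ(2n) θ^{2n} / ((2π)^{2n} · n · (2n+1)). -/
/-!
The function `-Cl₂` is the integral of `log (2 sin (t/2))` from `0` (`clausen2_eq_integral`). This
follows from the expansion `-log |1 - r e^{it}| = ∑ rᵏ cos (k t) / k` for `r < 1`, which is
integrated termwise before letting `r → 1⁻`; the logarithmic singularity at `t = 0` is integrable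
and dominates the integrands for `r` near `1`.

On the other hand, taking logarithms in Euler's product for the sine and expanding every factor
gives `log t - log (2 sin (t/2)) = ∑ ζ(2n) t^{2n} / (n (2π)^{2n})` for `0 < t < 2π`
(`hasSum_zetaR_log_sin`). Integrating this power series termwise over `[0, θ]`, together with
`∫₀^θ log t dt = θ log θ - θ`, yields the formula for `θ > 0`. Negative `θ` follows by parity.
-/

open Real

/-- Real Riemann zeta values via the series `∑ 1/k^m`. -/
noncomputable def zetaR (m : ℕ) : ℝ := ∑' k : ℕ, 1 / ((k : ℝ) + 1) ^ m

/-- Clausen function `Cl₂`. -/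
noncomputable def clausen2 (θ : ℝ) : ℝ := ∑' k : ℕ, Real.sin (((k : ℝ) + 1) * θ) / ((k : ℝ) + 1) ^ 2

open Filter Topology MeasureTheory

/-- Euler's sine product in logarithmic form: the logarithm of each factor `1 - x² / (k+1)²` is
expanded in a power series, and the resulting nonnegative double series is summed over `k` first. -/
lemma hasSum_zetaR_log_sin {x : ℝ} (hx0 : 0 < x) (hx1 : x < 1) :
    HasSum (fun n : ℕ => zetaR (2 * (n + 1)) * x ^ (2 * (n + 1)) / ((n : ℝ) + 1))
      (Real.log (π * x) - Real.log (Real.sin (π * x))) := by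
  have hpx : 0 < π * x := mul_pos pi_pos hx0
  have hs : 0 < Real.sin (π * x) := Real.sin_pos_of_pos_of_lt_pi hpx (by nlinarith [pi_pos])
  have hy (k : ℕ) : 0 ≤ x ^ 2 / ((k : ℝ) + 1) ^ 2 ∧ x ^ 2 / ((k : ℝ) + 1) ^ 2 < 1 := by
    refine ⟨by positivity, ?_⟩
    rw [div_lt_one (by positivity)]
    have : (0 : ℝ) ≤ k := k.cast_nonneg
    nlinarith
  have hrow (k : ℕ) : HasSum (fun n : ℕ => (x ^ 2 / ((k : ℝ) + 1) ^ 2) ^ (n + 1) / ((n : ℝ) + 1))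
      (-Real.log (1 - x ^ 2 / ((k : ℝ) + 1) ^ 2)) :=
    hasSum_pow_div_log_of_abs_lt_one (by rw [abs_of_nonneg (hy k).1]; exact (hy k).2)
  have hlog : HasSum (fun k : ℕ => -Real.log (1 - x ^ 2 / ((k : ℝ) + 1) ^ 2))
      (Real.log (π * x) - Real.log (Real.sin (π * x))) := by
    rw [hasSum_iff_tendsto_nat_of_nonneg]
    · have h := ((Real.continuousAt_log hs.ne').tendsto.comp
        (Real.tendsto_euler_sin_prod x)).const_sub (Real.log (π * x))
      refine h.congr fun n => ?_
      have hne : ∀ j ∈ Finset.range n, (1 - x ^ 2 / ((j : ℝ) + 1) ^ 2) ≠ 0 := fun j _ => by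
        linarith [(hy j).2]
      simp only [Function.comp]
      rw [Real.log_mul hpx.ne' (Finset.prod_ne_zero_iff.mpr hne), Real.log_prod hne,
        Finset.sum_neg_distrib]
      ring
    · intro k
      exact (hrow k).nonneg fun n => by positivity
  let f : ℕ × ℕ → ℝ := fun p => (x ^ 2 / ((p.1 : ℝ) + 1) ^ 2) ^ (p.2 + 1) / ((p.2 : ℝ) + 1)
  have hf : Summable f := by
    rw [summable_prod_of_nonneg (fun p => by simp only [f, Pi.zero_apply]; positivity)]
    exact ⟨fun k => (hrow k).summable, by
      simpa only [f, fun k => (hrow k).tsum_eq] using hlog.summable⟩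
  have hval : ∑' p, f p = Real.log (π * x) - Real.log (Real.sin (π * x)) :=
    (hf.hasSum.prod_fiberwise hrow).unique hlog
  have hsw := (hf.prod_symm.hasSum).prod_fiberwise (fun n => (hf.prod_symm.prod_factor n).hasSum)
  have hval' : ∑' p : ℕ × ℕ, f p.swap = ∑' p, f p := (Equiv.prodComm ℕ ℕ).tsum_eq f
  rw [hval', hval] at hsw
  convert hsw using 2 with n
  simp only [f, Prod.swap, zetaR]
  rw [mul_div_assoc, ← tsum_mul_right]
  refine tsum_congr fun k => ?_
  rw [div_pow, ← pow_mul, ← pow_mul]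
  ring

/-- The real part of `-log (1 - z) = ∑ zᵏ / k` at `z = r e^{it}`, where
`|1 - z|² = (1 - r)² + 4 r sin² (t/2)`. As `r → 1⁻` the value tends to `-log (2 sin (t/2))` for
`0 < t < 2π`. -/
lemma hasSum_cos_abel {r : ℝ} (hr0 : 0 ≤ r) (hr1 : r < 1) (t : ℝ) :
    HasSum (fun k : ℕ => r ^ (k + 1) * Real.cos (((k : ℝ) + 1) * t) / ((k : ℝ) + 1))
      (-(1 / 2) * Real.log ((1 - r) ^ 2 + 4 * r * Real.sin (t / 2) ^ 2)) := by
  have hz : ‖(r : ℂ) * Complex.exp (t * Complex.I)‖ < 1 := by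
    rw [norm_mul, Complex.norm_exp_ofReal_mul_I, mul_one, Complex.norm_real, Real.norm_eq_abs,
      abs_of_nonneg hr0]
    exact hr1
  have h := (hasSum_nat_add_iff' 1).mpr (Complex.hasSum_re (Complex.hasSum_taylorSeries_neg_log hz))
  have hcos : Real.cos t = 1 - 2 * Real.sin (t / 2) ^ 2 := by
    rw [← Real.cos_two_mul_eq_one_sub]
    ring_nf
  convert h using 1
  · rfl
  · funext k
    have : ((r : ℂ) * Complex.exp (t * Complex.I)) ^ (k + 1) / ((k + 1 : ℕ) : ℂ)
        = ((r ^ (k + 1) / ((k : ℝ) + 1) : ℝ) : ℂ) *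
          Complex.exp (((((k : ℝ) + 1) * t : ℝ) : ℂ) * Complex.I) := by
      rw [mul_pow, ← Complex.exp_nat_mul]
      push_cast
      rw [show ((k : ℂ) + 1) * (t * Complex.I) = ((k : ℂ) + 1) * t * Complex.I by ring]
      ring
    rw [this, Complex.re_ofReal_mul, Complex.exp_ofReal_mul_I_re]
    ring
  · have hn : ‖1 - (r : ℂ) * Complex.exp (t * Complex.I)‖ ^ 2
        = (1 - r) ^ 2 + 4 * r * Real.sin (t / 2) ^ 2 := by
      rw [← Complex.normSq_eq_norm_sq, Complex.normSq_apply]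
      simp only [Complex.sub_re, Complex.one_re, Complex.re_ofReal_mul,
        Complex.exp_ofReal_mul_I_re, Complex.sub_im, Complex.one_im, Complex.im_ofReal_mul,
        Complex.exp_ofReal_mul_I_im]
      have := Real.sin_sq_add_cos_sq t
      linear_combination r ^ 2 * this - 2 * r * hcos
    rw [← hn, Real.log_pow]
    simp [Complex.log_re]

lemma integral_cos_mul (k : ℕ) (θ : ℝ) :
    ∫ t in (0 : ℝ)..θ, Real.cos (((k : ℝ) + 1) * t) =
      Real.sin (((k : ℝ) + 1) * θ) / ((k : ℝ) + 1) := by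
  have hk : (k : ℝ) + 1 ≠ 0 := by positivity
  rw [intervalIntegral.integral_comp_mul_left (fun u => Real.cos u) hk, integral_cos]
  simp [div_eq_inv_mul]

/-- Termwise integration of `hasSum_cos_abel` over `[0, θ]`; the right-hand side is the Abel mean of
the Clausen series. -/
lemma integral_abel {r : ℝ} (hr0 : 0 ≤ r) (hr1 : r < 1) (θ : ℝ) :
    ∫ t in (0 : ℝ)..θ, -(1 / 2) * Real.log ((1 - r) ^ 2 + 4 * r * Real.sin (t / 2) ^ 2) =
      ∑' k : ℕ, r ^ (k + 1) * (Real.sin (((k : ℝ) + 1) * θ) / ((k : ℝ) + 1) ^ 2) := by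
  have hsum : Summable fun k : ℕ => r ^ (k + 1) :=
    (summable_nat_add_iff 1).mpr (summable_geometric_of_lt_one hr0 hr1)
  have h := intervalIntegral.hasSum_integral_of_dominated_convergence (μ := volume)
    (a := 0) (b := θ)
    (F := fun (k : ℕ) (t : ℝ) => r ^ (k + 1) * Real.cos (((k : ℝ) + 1) * t) / ((k : ℝ) + 1))
    (f := fun t => -(1 / 2) * Real.log ((1 - r) ^ 2 + 4 * r * Real.sin (t / 2) ^ 2))
    (fun k _ => r ^ (k + 1))
    (fun k => (by fun_prop : Continuous fun t : ℝ =>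
      r ^ (k + 1) * Real.cos (((k : ℝ) + 1) * t) / ((k : ℝ) + 1)).aestronglyMeasurable)
    (fun k => Eventually.of_forall fun t _ => by
      rw [Real.norm_eq_abs, abs_div, abs_mul, abs_of_nonneg (pow_nonneg hr0 _),
        abs_of_pos (by positivity : (0 : ℝ) < (k : ℝ) + 1)]
      have h1 : (1 : ℝ) ≤ (k : ℝ) + 1 := by linarith [(k.cast_nonneg : (0 : ℝ) ≤ k)]
      refine (div_le_self (by positivity) h1).trans ?_
      exact mul_le_of_le_one_right (by positivity) (Real.abs_cos_le_one _))
    (Eventually.of_forall fun _ _ => hsum)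
    intervalIntegrable_const
    (Eventually.of_forall fun t _ => hasSum_cos_abel hr0 hr1 t)
  rw [← h.tsum_eq]
  refine tsum_congr fun k => ?_
  rw [intervalIntegral.integral_div, intervalIntegral.integral_const_mul, integral_cos_mul]
  have hk : (k : ℝ) + 1 ≠ 0 := by positivity
  field_simp

lemma summable_one_div_succ_sq : Summable fun k : ℕ => 1 / ((k : ℝ) + 1) ^ 2 := by
  have h := (summable_nat_add_iff 1).mpr (Real.summable_one_div_nat_pow.mpr one_lt_two)
  exact_mod_cast h

lemma intervalIntegrable_log_sin_half (a b : ℝ) :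
    IntervalIntegrable (fun t : ℝ => Real.log (Real.sin (t / 2))) volume a b := by
  have hs : AnalyticOnNhd ℝ (fun t : ℝ => Real.sin (t / 2)) Set.univ :=
    Real.analyticOnNhd_sin.comp (t := Set.univ)
      (analyticOnNhd_id.div analyticOnNhd_const (by simp)) (by simp)
  exact (hs.meromorphicOn.mono_set (Set.subset_univ _)).intervalIntegrable_log

/-- The classical integral formula `Cl₂(θ) = -∫₀^θ log (2 sin (t/2)) dt`, obtained by letting
`r → 1⁻` in `integral_abel`, with dominated convergence on both sides. -/
lemma clausen2_eq_integral {θ : ℝ} (h0 : 0 < θ) (h1 : θ < 2 * π) :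
    clausen2 θ = ∫ t in (0 : ℝ)..θ, -Real.log (2 * Real.sin (t / 2)) := by
  have hev : ∀ᶠ r : ℝ in 𝓝[<] 1, r ∈ Set.Ioo (1 / 2 : ℝ) 1 := Ioo_mem_nhdsLT (by norm_num)
  have hsin : ∀ t ∈ Set.uIoc 0 θ, 0 < Real.sin (t / 2) := by
    intro t ht
    rw [Set.uIoc_of_le h0.le] at ht
    exact Real.sin_pos_of_pos_of_lt_pi (by linarith [ht.1]) (by linarith [ht.2])
  have hL : Tendsto (fun r : ℝ =>
      ∑' k : ℕ, r ^ (k + 1) * (Real.sin (((k : ℝ) + 1) * θ) / ((k : ℝ) + 1) ^ 2))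
      (𝓝[<] 1) (𝓝 (clausen2 θ)) := by
    refine tendsto_tsum_of_dominated_convergence summable_one_div_succ_sq (fun k => ?_) ?_
    · have : Continuous fun r : ℝ =>
          r ^ (k + 1) * (Real.sin (((k : ℝ) + 1) * θ) / ((k : ℝ) + 1) ^ 2) := by fun_prop
      simpa using (this.tendsto 1).mono_left nhdsWithin_le_nhds
    · filter_upwards [hev] with r hr k
      have hr0 : 0 ≤ r := by linarith [hr.1]
      rw [Real.norm_eq_abs, abs_mul, abs_div, abs_of_nonneg (pow_nonneg hr0 _),
        abs_of_nonneg (by positivity : (0 : ℝ) ≤ ((k : ℝ) + 1) ^ 2)]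
      refine (mul_le_of_le_one_left (by positivity) (pow_le_one₀ hr0 hr.2.le)).trans ?_
      gcongr
      exact Real.abs_sin_le_one _
  have hR : Tendsto (fun r : ℝ =>
      ∫ t in (0 : ℝ)..θ, -(1 / 2) * Real.log ((1 - r) ^ 2 + 4 * r * Real.sin (t / 2) ^ 2))
      (𝓝[<] 1) (𝓝 (∫ t in (0 : ℝ)..θ, -Real.log (2 * Real.sin (t / 2)))) := by
    refine intervalIntegral.tendsto_integral_filter_of_dominated_convergence
      (fun t => Real.log 5 + Real.log 2 + 2 * |Real.log (Real.sin (t / 2))|) ?_ ?_ ?_ ?_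
    · filter_upwards with r
      exact (by fun_prop : Measurable fun t : ℝ =>
        -(1 / 2) * Real.log ((1 - r) ^ 2 + 4 * r * Real.sin (t / 2) ^ 2)).aestronglyMeasurable
    · filter_upwards [hev] with r hr
      refine Eventually.of_forall fun t ht => ?_
      have hs := hsin t ht
      have hs1 := Real.sin_le_one (t / 2)
      obtain ⟨hr0, hr1⟩ := hr
      -- for `r ∈ (1/2, 1)` the argument of the logarithm lies between `2 sin² (t/2)` and `5`
      have hlow : 2 * Real.sin (t / 2) ^ 2 ≤ (1 - r) ^ 2 + 4 * r * Real.sin (t / 2) ^ 2 := by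
        nlinarith [sq_nonneg (1 - r), sq_nonneg (Real.sin (t / 2))]
      have hup : (1 - r) ^ 2 + 4 * r * Real.sin (t / 2) ^ 2 ≤ 5 := by
        have : Real.sin (t / 2) ^ 2 ≤ 1 := by nlinarith
        nlinarith [mul_nonneg (by linarith : 0 ≤ r) (by linarith : 0 ≤ 1 - Real.sin (t / 2) ^ 2)]
      have hpos : 0 < 2 * Real.sin (t / 2) ^ 2 := by positivity
      have l1 := Real.log_le_log hpos hlow
      have l2 := Real.log_le_log (hpos.trans_le hlow) hup
      rw [Real.log_mul two_ne_zero (by positivity), Real.log_pow] at l1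
      push_cast at l1
      have hl2 : 0 < Real.log 2 := Real.log_pos (by norm_num)
      have hl5 : 0 < Real.log 5 := Real.log_pos (by norm_num)
      have ha := neg_abs_le (Real.log (Real.sin (t / 2)))
      have ha' := abs_nonneg (Real.log (Real.sin (t / 2)))
      rw [Real.norm_eq_abs, abs_le]
      constructor <;> linarith
    · exact intervalIntegrable_const.add ((intervalIntegrable_log_sin_half 0 θ).abs.const_mul 2)
    · refine Eventually.of_forall fun t ht => ?_
      have hs := hsin t ht
      have hc : ContinuousAt (fun r : ℝ =>
          -(1 / 2) * Real.log ((1 - r) ^ 2 + 4 * r * Real.sin (t / 2) ^ 2)) 1 := by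
        refine continuousAt_const.mul (ContinuousAt.log (by fun_prop) ?_)
        have : 0 < Real.sin (t / 2) ^ 2 := by positivity
        linarith
      have he : -(1 / 2) * Real.log ((1 - 1) ^ 2 + 4 * 1 * Real.sin (t / 2) ^ 2)
          = -Real.log (2 * Real.sin (t / 2)) := by
        rw [show ((1 : ℝ) - 1) ^ 2 + 4 * 1 * Real.sin (t / 2) ^ 2 = (2 * Real.sin (t / 2)) ^ 2 by
          ring, Real.log_pow]
        push_cast
        ring
      rw [← he]
      exact hc.tendsto.mono_left nhdsWithin_le_nhds
  refine tendsto_nhds_unique hL (hR.congr' ?_)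
  filter_upwards [hev] with r hr
  exact integral_abel (by linarith [hr.1]) hr.2 θ

lemma zetaR_nonneg (m : ℕ) : 0 ≤ zetaR m := tsum_nonneg fun k => by positivity

lemma clausen_acceleration_pos {θ : ℝ} (h0 : 0 < θ) (h1 : θ < 2 * π) :
    clausen2 θ / θ =
      1 - Real.log θ +
        ∑' n : ℕ, zetaR (2 * (n + 1)) * θ ^ (2 * (n + 1)) /
          ((2 * π) ^ (2 * (n + 1)) * ((n : ℝ) + 1) * (2 * ((n : ℝ) + 1) + 1)) := by
  have hpi := pi_pos
  let a : ℕ → ℝ := fun n => zetaR (2 * (n + 1)) / ((2 * π) ^ (2 * (n + 1)) * ((n : ℝ) + 1))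
  have ha (n : ℕ) : 0 ≤ a n := div_nonneg (zetaR_nonneg _) (by positivity)
  have hlog {t : ℝ} (ht : t ∈ Set.Ioc 0 θ) : HasSum (fun n => a n * t ^ (2 * (n + 1)))
      (Real.log t - Real.log (2 * Real.sin (t / 2))) := by
    have hs : 0 < Real.sin (t / 2) :=
      Real.sin_pos_of_pos_of_lt_pi (by linarith [ht.1]) (by linarith [ht.2])
    have h := hasSum_zetaR_log_sin (x := t / (2 * π)) (div_pos ht.1 (by positivity))
      ((div_lt_one (by positivity)).mpr (by linarith [ht.2]))
    have e : π * (t / (2 * π)) = t / 2 := by field_simp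
    rw [e, Real.log_div ht.1.ne' two_ne_zero] at h
    rw [Real.log_mul two_ne_zero hs.ne', ← sub_sub]
    convert h using 2 with n
    · simp only [a]
      rw [div_pow]
      field_simp
  have hint : HasSum (fun n => ∫ t in (0 : ℝ)..θ, a n * t ^ (2 * (n + 1)))
      (∫ t in (0 : ℝ)..θ, (Real.log t - Real.log (2 * Real.sin (t / 2)))) := by
    refine intervalIntegral.hasSum_integral_of_dominated_convergence
      (fun n _ => a n * θ ^ (2 * (n + 1)))
      (fun n => (by fun_prop : Continuous fun t : ℝ =>
        a n * t ^ (2 * (n + 1))).aestronglyMeasurable)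
      (fun n => Eventually.of_forall fun t ht => ?_)
      (Eventually.of_forall fun _ _ => (hlog ⟨h0, le_rfl⟩).summable)
      intervalIntegrable_const
      (Eventually.of_forall fun t ht => hlog (by rwa [Set.uIoc_of_le h0.le] at ht))
    rw [Set.uIoc_of_le h0.le] at ht
    rw [Real.norm_of_nonneg (mul_nonneg (ha n) (pow_nonneg ht.1.le _))]
    exact mul_le_mul_of_nonneg_left (pow_le_pow_left₀ ht.1.le ht.2 _) (ha n)
  have hsin_int : IntervalIntegrable (fun t : ℝ => -Real.log (2 * Real.sin (t / 2))) volume 0 θ := by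
    refine ((intervalIntegrable_const (c := Real.log 2)).add
      (intervalIntegrable_log_sin_half 0 θ)).neg.congr fun t ht => ?_
    rw [Set.uIoc_of_le h0.le] at ht
    have hs : 0 < Real.sin (t / 2) :=
      Real.sin_pos_of_pos_of_lt_pi (by linarith [ht.1]) (by linarith [ht.2])
    simp [Real.log_mul two_ne_zero hs.ne']
  have hvalue : ∫ t in (0 : ℝ)..θ, (Real.log t - Real.log (2 * Real.sin (t / 2))) =
      θ * Real.log θ - θ + clausen2 θ := by
    simp only [sub_eq_add_neg (Real.log _)]
    rw [intervalIntegral.integral_add intervalIntegral.intervalIntegrable_log' hsin_int,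
      ← clausen2_eq_integral h0 h1, integral_log]
    simp
  rw [hvalue] at hint
  have hfin : ∑' n : ℕ, zetaR (2 * (n + 1)) * θ ^ (2 * (n + 1)) /
      ((2 * π) ^ (2 * (n + 1)) * ((n : ℝ) + 1) * (2 * ((n : ℝ) + 1) + 1)) =
      (θ * Real.log θ - θ + clausen2 θ) / θ := by
    rw [← (hint.div_const θ).tsum_eq]
    refine tsum_congr fun n => ?_
    rw [intervalIntegral.integral_const_mul, integral_pow]
    simp only [a]
    push_cast
    rw [zero_pow (by omega), sub_zero, pow_succ θ (2 * (n + 1))]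
    field_simp
  rw [hfin]
  field_simp
  ring

lemma clausen2_neg (θ : ℝ) : clausen2 (-θ) = -clausen2 θ := by
  simp only [clausen2, mul_neg, Real.sin_neg, neg_div, tsum_neg]

theorem clausen_acceleration (θ : ℝ) (h0 : 0 < |θ|) (h1 : |θ| < 2 * π) :
    clausen2 θ / θ =
      1 - Real.log |θ| +
        ∑' n : ℕ, zetaR (2 * (n + 1)) * θ ^ (2 * (n + 1)) /
          ((2 * π) ^ (2 * (n + 1)) * ((n : ℝ) + 1) * (2 * ((n : ℝ) + 1) + 1)) := by
  have h := clausen_acceleration_pos h0 h1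
  -- both sides are even in `θ`
  have hpow (n : ℕ) : |θ| ^ (2 * (n + 1)) = θ ^ (2 * (n + 1)) := by
    rw [pow_mul, sq_abs, ← pow_mul]
  have hdiv : clausen2 |θ| / |θ| = clausen2 θ / θ := by
    rcases abs_choice θ with e | e <;> rw [e]
    rw [clausen2_neg, neg_div_neg_eq]
  simpa only [hpow, hdiv] using h
end

section
/- Apery's constant satisfies ζ(3) = −(64/(3π))·β(4) + (8π²/9) · (4/3 − log(π/2) + 3·Σ_{n=1}^{∞} ζ(2n) / (n(2n+1)(2n+3)·16^n)). -/
/-! Write `S` for the zeta series on the right-hand side. Since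
`∫₀¹ (1 - v²) v^(2n) dv = 2 / ((2n+1)(2n+3))`, and since the logarithm of Euler's sine product gives
`∑ ζ(2n) x^(2n) / n = log (πx / sin πx)`, putting `x = v / 4` yields
`S = (1/2) ∫₀¹ (1 - v²) log ((πv/4) / sin (πv/4)) dv` (`zeta_series_eq_integral`).

Split the logarithm as `log (πv/2) - log (2 sin (πv/4))`. The first part has an elementary integral
(`integral_mul_log`). For the second, use the Fourier series
`-log (2 sin (θ/2)) = ∑ cos (kθ) / k` with `θ = πv/2`: integrating `(1 - v²) cos (kπv/2)` by parts
leaves `sin (kπ/2) / k³` and `cos (kπ/2) / k²`, so that odd `k` contribute a multiple of `β(4)`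
and even `k` a multiple of `η(3) = (3/4) ζ(3)` (`fourierTerm_hasSum`).

As the Fourier series converges only conditionally, it is integrated in its Abel-regularised form
`-log ‖1 - r exp(iθ)‖ = ∑ r^k cos (kθ) / k` with `r < 1`, and then `r → 1⁻`
(`integral_log_modSq_one`). Both sides pass to the limit by dominated convergence: the integrated
series is absolutely summable at `r = 1`, and `v² ≤ ‖1 - r exp(iπv/2)‖² ≤ 4` bounds the
logarithm by an integrable function independent of `r`.
-/


open Real

/-- Dirichlet beta function at natural arguments. -/
noncomputable def betaR (s : ℕ) : ℝ := ∑' n : ℕ, (-1 : ℝ) ^ n / (2 * (n : ℝ) + 1) ^ s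

open Filter Topology MeasureTheory

/-! ### Zeta, beta and eta sums -/

lemma zetaR_hasSum {m : ℕ} (hm : 1 < m) :
    HasSum (fun k : ℕ => 1 / ((k : ℝ) + 1) ^ m) (zetaR m) := by
  have h := (summable_nat_add_iff 1).2 (Real.summable_one_div_nat_pow.2 hm)
  simp only [Nat.cast_add, Nat.cast_one] at h
  exact h.hasSum

lemma betaR_four_hasSum :
    HasSum (fun n : ℕ => (-1 : ℝ) ^ n / (2 * (n : ℝ) + 1) ^ 4) (betaR 4) := by
  refine Summable.hasSum (Summable.of_norm_bounded (zetaR_hasSum (m := 4) (by norm_num)).summable ?_)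
  intro n
  rw [norm_div, norm_pow, norm_neg, norm_one, one_pow, Real.norm_of_nonneg (by positivity)]
  gcongr
  have : (0 : ℝ) ≤ n := n.cast_nonneg
  linarith

/-- The Dirichlet eta value `η(3) = (3/4) ζ(3)`. -/
lemma eta_three_hasSum :
    HasSum (fun n : ℕ => (-1 : ℝ) ^ n / ((n : ℝ) + 1) ^ 3) (3 / 4 * zetaR 3) := by
  have hz := zetaR_hasSum (m := 3) (by norm_num)
  have hodd : HasSum (fun n : ℕ => 1 / (((2 * n + 1 : ℕ) : ℝ) + 1) ^ 3) (1 / 8 * zetaR 3) := by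
    refine (hz.mul_left (1 / 8)).congr_fun ?_
    intro n
    push_cast
    field_simp
    ring
  obtain ⟨e, he⟩ : Summable (fun n : ℕ => 1 / (((2 * n : ℕ) : ℝ) + 1) ^ 3) :=
    hz.summable.comp_injective (i := fun n : ℕ => 2 * n) (fun a b h => by simpa using h)
  have hsum : e + 1 / 8 * zetaR 3 = zetaR 3 :=
    (HasSum.even_add_odd (f := fun k : ℕ => 1 / ((k : ℝ) + 1) ^ 3) he hodd).unique hz
  have hval : 3 / 4 * zetaR 3 = e + -(1 / 8 * zetaR 3) := by linarith
  rw [hval]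
  refine HasSum.even_add_odd (he.congr_fun ?_) (hodd.neg.congr_fun ?_)
  · intro n; simp [pow_mul]
  · intro n; simp [pow_succ, pow_mul, neg_div]

/-! ### The zeta series as an integral -/

/-- The logarithm of Euler's product for the sine, expanded in powers of `x`. -/
lemma log_div_sin_hasSum {x : ℝ} (hx0 : 0 < x) (hx1 : x < 1) :
    HasSum (fun n : ℕ => zetaR (2 * (n + 1)) * x ^ (2 * (n + 1)) / ((n : ℝ) + 1))
      (log (π * x / sin (π * x))) := by
  have hlt : ∀ j : ℕ, x ^ 2 / ((j : ℝ) + 1) ^ 2 < 1 := by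
    intro j
    have hj : (0 : ℝ) ≤ j := j.cast_nonneg
    rw [div_lt_one (by positivity)]
    exact pow_lt_pow_left₀ (by linarith) hx0.le two_ne_zero
  have hsin : 0 < sin (π * x) :=
    sin_pos_of_pos_of_lt_pi (by positivity) (by nlinarith [pi_pos])
  have hpx : 0 < π * x := by positivity
  have hg : HasSum (fun j : ℕ => -log (1 - x ^ 2 / ((j : ℝ) + 1) ^ 2))
      (log (π * x / sin (π * x))) := by
    rw [hasSum_iff_tendsto_nat_of_nonneg]
    · have h1 := ((Real.tendsto_euler_sin_prod x).log hsin.ne').const_sub (log (π * x))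
      rw [← log_div hpx.ne' hsin.ne'] at h1
      refine h1.congr ?_
      intro n
      have hne : ∀ j ∈ Finset.range n, (1 - x ^ 2 / ((j : ℝ) + 1) ^ 2) ≠ 0 :=
        fun j _ => (sub_pos.2 (hlt j)).ne'
      rw [log_mul hpx.ne' (Finset.prod_ne_zero_iff.2 hne), log_prod hne,
        Finset.sum_neg_distrib]
      ring
    · intro j
      have : 0 ≤ x ^ 2 / ((j : ℝ) + 1) ^ 2 := by positivity
      exact neg_nonneg.2 (log_nonpos (sub_pos.2 (hlt j)).le (by linarith))
  -- `∑ⱼ -log (1 - x² / (j+1)²)` is expanded into a double series of nonnegative terms, which can be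
  -- summed in the other order.
  obtain ⟨F, hF⟩ : ∃ F : ℕ × ℕ → ℝ,
      ∀ p, F p = (x ^ 2 / ((p.1 : ℝ) + 1) ^ 2) ^ (p.2 + 1) / ((p.2 : ℝ) + 1) := ⟨_, fun _ => rfl⟩
  have hrow : ∀ j : ℕ, HasSum (fun n : ℕ => F (j, n)) (-log (1 - x ^ 2 / ((j : ℝ) + 1) ^ 2)) := by
    intro j
    simp only [hF]
    refine Real.hasSum_pow_div_log_of_abs_lt_one ?_
    rw [abs_of_nonneg (by positivity)]
    exact hlt j
  have hcol : ∀ n : ℕ, HasSum (fun j : ℕ => F (j, n))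
      (zetaR (2 * (n + 1)) * x ^ (2 * (n + 1)) / ((n : ℝ) + 1)) := by
    intro n
    have h := ((zetaR_hasSum (m := 2 * (n + 1)) (by omega)).mul_right
      (x ^ (2 * (n + 1)))).div_const ((n : ℝ) + 1)
    refine h.congr_fun ?_
    intro j
    simp only [hF, div_pow, ← pow_mul]
    ring
  have hFs : Summable F := by
    refine (summable_prod_of_nonneg (fun p => by simp only [hF, Pi.zero_apply]; positivity)).2
      ⟨fun j => (hrow j).summable, ?_⟩
    simp only [fun j => (hrow j).tsum_eq]
    exact hg.summable
  have htot : HasSum F (log (π * x / sin (π * x))) := by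
    have h := hFs.hasSum
    rwa [(h.prod_fiberwise hrow).unique hg] at h
  exact ((Equiv.prodComm ℕ ℕ).hasSum_iff.2 htot).prod_fiberwise hcol

lemma integral_pow_mul (n : ℕ) :
    ∫ v in (0 : ℝ)..1, (1 - v ^ 2) * v ^ (2 * (n + 1)) =
      2 / ((2 * ((n : ℝ) + 1) + 1) * (2 * ((n : ℝ) + 1) + 3)) := by
  have h : ∀ v : ℝ, (1 - v ^ 2) * v ^ (2 * (n + 1)) = v ^ (2 * n + 2) - v ^ (2 * n + 4) := by
    intro v; ring
  simp only [h]
  rw [intervalIntegral.integral_sub (by simp) (by simp), integral_pow, integral_pow]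
  have : (0 : ℝ) ≤ n := n.cast_nonneg
  push_cast
  simp
  field_simp
  ring

/-- The zeta series as an integral of `log (y / sin y)` with `y = π v / 4`; the weight `1 - v ^ 2`
produces the factor `1 / ((2n+1)(2n+3))`. -/
lemma zeta_series_eq_integral :
    ∑' n : ℕ, zetaR (2 * (n + 1)) /
          (((n : ℝ) + 1) * (2 * ((n : ℝ) + 1) + 1) * (2 * ((n : ℝ) + 1) + 3) * 16 ^ (n + 1)) =
      1 / 2 * ∫ v in (0 : ℝ)..1, (1 - v ^ 2) * log (π * (v / 4) / sin (π * (v / 4))) := by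
  have hz : ∀ n : ℕ, 0 ≤ zetaR (2 * (n + 1)) := fun n => tsum_nonneg fun k => by positivity
  have key : HasSum (fun n : ℕ => ∫ v in (0 : ℝ)..1, (1 - v ^ 2) *
      (zetaR (2 * (n + 1)) * (v / 4) ^ (2 * (n + 1)) / ((n : ℝ) + 1)))
      (∫ v in (0 : ℝ)..1, (1 - v ^ 2) * log (π * (v / 4) / sin (π * (v / 4)))) := by
    refine intervalIntegral.hasSum_integral_of_dominated_convergence
      -- The bound is the value of the series at `v = 1`.
      (fun n _ => zetaR (2 * (n + 1)) * (1 / 4) ^ (2 * (n + 1)) / ((n : ℝ) + 1)) ?_ ?_ ?_ ?_ ?_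
    · intro n
      exact (by fun_prop : Continuous _).aestronglyMeasurable
    · intro n
      refine Eventually.of_forall fun v hv => ?_
      rw [Set.uIoc_of_le zero_le_one] at hv
      have hv0 := hv.1.le
      have h1 : v ^ 2 ≤ 1 := pow_le_one₀ hv0 hv.2
      have hzn := hz n
      rw [Real.norm_of_nonneg (mul_nonneg (by linarith) (by positivity))]
      refine (mul_le_of_le_one_left (by positivity) (by nlinarith)).trans ?_
      gcongr
      exact hv.2
    · exact Eventually.of_forall fun v _ =>
        (log_div_sin_hasSum (x := 1 / 4) (by norm_num) (by norm_num)).summable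
    · simp
    · refine Eventually.of_forall fun v hv => ?_
      rw [Set.uIoc_of_le zero_le_one] at hv
      exact (log_div_sin_hasSum (by linarith [hv.1]) (by linarith [hv.2])).mul_left _
  rw [← (key.mul_left (1 / 2)).tsum_eq]
  refine tsum_congr fun n => ?_
  have h : ∀ v : ℝ, (1 - v ^ 2) * (zetaR (2 * (n + 1)) * (v / 4) ^ (2 * (n + 1)) / ((n : ℝ) + 1)) =
      (zetaR (2 * (n + 1)) / (((n : ℝ) + 1) * 16 ^ (n + 1))) *
        ((1 - v ^ 2) * v ^ (2 * (n + 1))) := by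
    intro v
    rw [div_pow, pow_mul (4 : ℝ)]
    norm_num
    field_simp
  simp only [h]
  rw [intervalIntegral.integral_const_mul, integral_pow_mul]
  field_simp

/-! ### Elementary integrals and Fourier coefficients -/

lemma integral_mul_log :
    ∫ v in (0 : ℝ)..1, (1 - v ^ 2) * (log (π / 2) + log v) = 2 / 3 * log (π / 2) - 8 / 9 := by
  have hint : IntervalIntegrable (fun v : ℝ => (1 - v ^ 2) * (log (π / 2) + log v)) volume 0 1 :=
    (intervalIntegrable_const.add intervalIntegral.intervalIntegrable_log').continuousOn_mul
      (by fun_prop)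
  rw [intervalIntegral.integral_eq_sub_of_hasDerivAt_of_le
    (f := fun v => (v - v ^ 3 / 3) * log (π / 2) + (1 - v ^ 2 / 3) * (v * log v) - v + v ^ 3 / 9)
    zero_le_one ?_ ?_ hint]
  · simp; ring
  · have := continuous_mul_log
    fun_prop
  · intro v hv
    have hd := (hasDerivAt_id v)
    have h3 := (hasDerivAt_pow 3 v)
    have h2 := (hasDerivAt_pow 2 v)
    have hl := Real.hasDerivAt_mul_log hv.1.ne'
    refine (((((hd.sub (h3.div_const 3)).mul_const (log (π / 2))).add
      (((h2.div_const 3).const_sub 1).mul hl)).sub hd).add (h3.div_const 9)).congr_deriv ?_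
    push_cast
    ring

lemma integral_mul_cos {a : ℝ} (ha : a ≠ 0) :
    ∫ v in (0 : ℝ)..1, (1 - v ^ 2) * cos (a * v) = -2 * cos a / a ^ 2 + 2 * sin a / a ^ 3 := by
  rw [intervalIntegral.integral_eq_sub_of_hasDerivAt (f := fun v => (1 - v ^ 2) * sin (a * v) / a -
    2 * v * cos (a * v) / a ^ 2 + 2 * sin (a * v) / a ^ 3) ?_
    ((by fun_prop : Continuous _).intervalIntegrable _ _)]
  · simp; ring
  · intro v _
    have h2 := (hasDerivAt_pow 2 v)
    have hm : HasDerivAt (fun v : ℝ => a * v) a v := by simpa using (hasDerivAt_id v).const_mul a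
    have hd : HasDerivAt (fun v : ℝ => 2 * v) 2 v := by simpa using (hasDerivAt_id v).const_mul 2
    refine (((((h2.const_sub 1).mul hm.sin).div_const a).sub
      ((hd.mul hm.cos).div_const (a ^ 2))).add
        ((hm.sin.const_mul 2).div_const (a ^ 3))).congr_deriv ?_
    push_cast
    field_simp
    ring

/-- The integral against the weight `1 - v ^ 2` of the term of frequency `k + 1` in the Fourier
series of `-log (2 sin (π v / 4))`. -/
noncomputable def fourierTerm (k : ℕ) : ℝ :=
  (∫ v in (0 : ℝ)..1, (1 - v ^ 2) * cos (((k : ℝ) + 1) * (π / 2) * v)) / ((k : ℝ) + 1)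

/-- Even indices `k` (odd frequencies `k + 1`) give `β(4)`, odd indices give `η(3)`. -/
lemma fourierTerm_hasSum :
    HasSum fourierTerm (16 / π ^ 3 * betaR 4 + 1 / π ^ 2 * (3 / 4 * zetaR 3)) := by
  have hval : ∀ k : ℕ, fourierTerm k = (-2 * cos (((k : ℝ) + 1) * (π / 2)) /
      (((k : ℝ) + 1) * (π / 2)) ^ 2 + 2 * sin (((k : ℝ) + 1) * (π / 2)) /
      (((k : ℝ) + 1) * (π / 2)) ^ 3) / ((k : ℝ) + 1) := by
    intro k
    rw [fourierTerm, integral_mul_cos (by positivity)]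
  refine HasSum.even_add_odd ((betaR_four_hasSum.mul_left (16 / π ^ 3)).congr_fun ?_)
    ((eta_three_hasSum.mul_left (1 / π ^ 2)).congr_fun ?_)
  · intro m
    have e : (((2 * m : ℕ) : ℝ) + 1) * (π / 2) = m * π + π / 2 := by push_cast; ring
    have hc : cos ((m : ℝ) * π + π / 2) = 0 := by
      rw [cos_add_pi_div_two, sin_nat_mul_pi, neg_zero]
    have hs : sin ((m : ℝ) * π + π / 2) = (-1) ^ m := by
      rw [sin_add_pi_div_two, cos_nat_mul_pi]
    rw [hval, e, hc, hs, ← e]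
    push_cast
    field_simp
    ring
  · intro m
    have e : (((2 * m + 1 : ℕ) : ℝ) + 1) * (π / 2) = ((m + 1 : ℕ) : ℝ) * π := by push_cast; ring
    rw [hval, e, sin_nat_mul_pi, cos_nat_mul_pi]
    push_cast
    rw [pow_succ]
    field_simp
    ring

/-! ### Abel regularisation of `log (2 sin (π v / 4))` -/

/-- `‖1 - r exp(iπv/2)‖ ^ 2`, the squared modulus whose logarithm is expanded in powers of `r`. -/
noncomputable def modSq (r v : ℝ) : ℝ := 1 - 2 * r * cos (π / 2 * v) + r ^ 2

/-- `modSq r v` is at least `sin (π v / 2) ^ 2`, the squared distance from `1` to the line through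
`0` and `exp(iπv/2)`; Jordan's inequality then gives the bound. -/
lemma sq_le_modSq {r v : ℝ} (hv0 : 0 ≤ v) (hv1 : v ≤ 1) : v ^ 2 ≤ modSq r v := by
  have hs : v ≤ sin (π / 2 * v) := by
    have h := Real.mul_le_sin (x := π / 2 * v) (by positivity) (by nlinarith [pi_pos])
    rwa [← mul_assoc, show 2 / π * (π / 2) = 1 by field_simp, one_mul] at h
  rw [modSq]
  nlinarith [sin_sq_add_cos_sq (π / 2 * v), sq_nonneg (r - cos (π / 2 * v))]

lemma modSq_le {r v : ℝ} (hr0 : 0 ≤ r) (hr1 : r ≤ 1) : modSq r v ≤ 4 := by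
  rw [modSq]
  nlinarith [neg_one_le_cos (π / 2 * v)]

/-- The majorant, uniform in `r`, used to let `r → 1⁻` under the integral. -/
lemma norm_weight_log_modSq_le {r v : ℝ} (hr0 : 0 ≤ r) (hr1 : r ≤ 1) (hv0 : 0 < v) (hv1 : v ≤ 1) :
    ‖(1 - v ^ 2) * log (modSq r v)‖ ≤ log 4 - 2 * log v := by
  have h1 := sq_le_modSq (r := r) hv0.le hv1
  have h2 := modSq_le (v := v) hr0 hr1
  have hv2 : 0 < v ^ 2 := by positivity
  have h3 := log_le_log hv2 h1
  have h4 := log_le_log (hv2.trans_le h1) h2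
  rw [log_pow] at h3
  push_cast at h3
  have h5 : log v ≤ 0 := log_nonpos hv0.le hv1
  have h6 : (0 : ℝ) ≤ log 4 := log_nonneg (by norm_num)
  have h7 : |1 - v ^ 2| ≤ 1 := abs_le.2 ⟨by nlinarith, by nlinarith⟩
  rw [norm_mul, Real.norm_eq_abs, Real.norm_eq_abs]
  exact (mul_le_of_le_one_left (abs_nonneg _) h7).trans
    (abs_le.2 ⟨by linarith, by linarith⟩)

lemma intervalIntegrable_bound :
    IntervalIntegrable (fun v : ℝ => log 4 - 2 * log v) volume 0 1 :=
  intervalIntegrable_const.sub (intervalIntegral.intervalIntegrable_log'.const_mul 2)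

lemma measurable_weight_log_modSq (r : ℝ) :
    Measurable (fun v : ℝ => (1 - v ^ 2) * log (modSq r v)) := by
  unfold modSq
  fun_prop

lemma intervalIntegrable_weight_log :
    IntervalIntegrable (fun v : ℝ => (1 - v ^ 2) * log (modSq 1 v)) volume 0 1 := by
  refine intervalIntegrable_bound.mono_fun' (measurable_weight_log_modSq 1).aestronglyMeasurable ?_
  refine (ae_restrict_iff' measurableSet_uIoc).2 (Eventually.of_forall fun v hv => ?_)
  rw [Set.uIoc_of_le zero_le_one] at hv
  exact norm_weight_log_modSq_le zero_le_one le_rfl hv.1 hv.2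

/-- The real part of the Taylor series of `-log (1 - z)` at `z = r exp(iπv/2)`. -/
lemma log_modSq_hasSum {r : ℝ} (hr0 : 0 ≤ r) (hr1 : r < 1) (v : ℝ) :
    HasSum (fun k : ℕ => r ^ (k + 1) * cos (((k : ℝ) + 1) * (π / 2) * v) / ((k : ℝ) + 1))
      (-(1 / 2) * log (modSq r v)) := by
  set z : ℂ := r * Complex.exp ((π / 2 * v : ℝ) * Complex.I) with hz
  have hnorm : ‖z‖ < 1 := by
    rw [hz, norm_mul, Complex.norm_exp_ofReal_mul_I, mul_one, Complex.norm_real,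
      Real.norm_of_nonneg hr0]
    exact hr1
  have h := Complex.hasSum_re (Complex.hasSum_taylorSeries_neg_log hnorm)
  -- The term of index `0` is `1 / 0 = 0`, so shifting the index leaves the sum unchanged.
  rw [← hasSum_nat_add_iff' 1] at h
  have hn : ‖1 - z‖ ^ 2 = modSq r v := by
    rw [← Complex.normSq_eq_norm_sq, Complex.normSq_apply, hz, Complex.exp_mul_I, modSq]
    simp [← Complex.ofReal_cos, ← Complex.ofReal_sin, -Complex.ofReal_mul, -Complex.ofReal_div]
    nlinarith [sin_sq_add_cos_sq (π / 2 * v)]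
  have hlog : -(1 / 2) * log (modSq r v) = (-Complex.log (1 - z)).re -
      ∑ i ∈ Finset.range 1, (z ^ i / (i : ℂ)).re := by
    rw [← hn, log_pow, Complex.neg_re, Complex.log_re]
    simp
  rw [hlog]
  refine h.congr_fun ?_
  intro k
  have : z ^ (k + 1) / ((k + 1 : ℕ) : ℂ) =
      ((r ^ (k + 1) / ((k : ℝ) + 1) : ℝ) : ℂ) *
        Complex.exp (((((k : ℝ) + 1) * (π / 2) * v : ℝ) : ℂ) * Complex.I) := by
    rw [hz, mul_pow, ← Complex.exp_nat_mul]
    push_cast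
    rw [show ((k : ℂ) + 1) * (π / 2 * v * Complex.I) = (k + 1) * (π / 2) * v * Complex.I by ring]
    ring
  rw [this, Complex.re_ofReal_mul, Complex.exp_ofReal_mul_I_re]
  ring

lemma integral_log_modSq {r : ℝ} (hr0 : 0 ≤ r) (hr1 : r < 1) :
    ∫ v in (0 : ℝ)..1, (1 - v ^ 2) * log (modSq r v) =
      -2 * ∑' k : ℕ, r ^ (k + 1) * fourierTerm k := by
  have key : HasSum (fun k : ℕ => ∫ v in (0 : ℝ)..1, (1 - v ^ 2) *
      (r ^ (k + 1) * cos (((k : ℝ) + 1) * (π / 2) * v) / ((k : ℝ) + 1)))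
      (∫ v in (0 : ℝ)..1, (1 - v ^ 2) * (-(1 / 2) * log (modSq r v))) := by
    refine intervalIntegral.hasSum_integral_of_dominated_convergence
      (fun k _ => r ^ (k + 1)) ?_ ?_ ?_ ?_ ?_
    · intro k
      exact (by fun_prop : Continuous _).aestronglyMeasurable
    · intro k
      refine Eventually.of_forall fun v hv => ?_
      rw [Set.uIoc_of_le zero_le_one] at hv
      have h7 : |1 - v ^ 2| ≤ 1 := abs_le.2 ⟨by nlinarith [hv.1, hv.2], by nlinarith⟩
      have hk : (1 : ℝ) ≤ (k : ℝ) + 1 := by simp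
      rw [norm_mul, norm_div, norm_mul, Real.norm_of_nonneg (pow_nonneg hr0 _),
        Real.norm_of_nonneg (by positivity : (0 : ℝ) ≤ (k : ℝ) + 1), Real.norm_eq_abs,
        Real.norm_eq_abs]
      refine (mul_le_of_le_one_left (by positivity) h7).trans
        ((div_le_self (by positivity) hk).trans ?_)
      exact mul_le_of_le_one_right (by positivity) (abs_cos_le_one _)
    · exact Eventually.of_forall fun v _ =>
        (summable_nat_add_iff 1).2 (summable_geometric_of_lt_one hr0 hr1)
    · simp
    · exact Eventually.of_forall fun v _ => (log_modSq_hasSum hr0 hr1 v).mul_left _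
  have h1 : ∀ v : ℝ, (1 - v ^ 2) * (-(1 / 2) * log (modSq r v)) =
      -(1 / 2) * ((1 - v ^ 2) * log (modSq r v)) := by intro v; ring
  simp only [h1] at key
  rw [intervalIntegral.integral_const_mul] at key
  have h2 : ∀ k : ℕ, ∫ v in (0 : ℝ)..1, (1 - v ^ 2) *
      (r ^ (k + 1) * cos (((k : ℝ) + 1) * (π / 2) * v) / ((k : ℝ) + 1)) =
      r ^ (k + 1) * fourierTerm k := by
    intro k
    rw [fourierTerm, ← intervalIntegral.integral_div, ← intervalIntegral.integral_const_mul]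
    refine intervalIntegral.integral_congr fun v _ => ?_
    ring
  simp only [h2] at key
  rw [key.tsum_eq]
  ring

/-- The weighted integral of `2 log (2 sin (π v / 4))`, obtained by letting `r → 1⁻`. -/
lemma integral_log_modSq_one :
    ∫ v in (0 : ℝ)..1, (1 - v ^ 2) * log (modSq 1 v) =
      -2 * (16 / π ^ 3 * betaR 4 + 1 / π ^ 2 * (3 / 4 * zetaR 3)) := by
  have hmem : ∀ᶠ r : ℝ in 𝓝[<] 1, 0 ≤ r ∧ r < 1 := by
    filter_upwards [Ioo_mem_nhdsLT (zero_lt_one (α := ℝ))] with r hr using ⟨hr.1.le, hr.2⟩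
  have hL : Tendsto (fun r : ℝ => ∫ v in (0 : ℝ)..1, (1 - v ^ 2) * log (modSq r v)) (𝓝[<] 1)
      (𝓝 (∫ v in (0 : ℝ)..1, (1 - v ^ 2) * log (modSq 1 v))) := by
    refine intervalIntegral.tendsto_integral_filter_of_dominated_convergence
      (fun v => log 4 - 2 * log v) ?_ ?_ intervalIntegrable_bound ?_
    · exact Eventually.of_forall fun r => (measurable_weight_log_modSq r).aestronglyMeasurable
    · filter_upwards [hmem] with r hr
      refine Eventually.of_forall fun v hv => ?_
      rw [Set.uIoc_of_le zero_le_one] at hv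
      exact norm_weight_log_modSq_le hr.1 hr.2.le hv.1 hv.2
    · refine Eventually.of_forall fun v hv => ?_
      rw [Set.uIoc_of_le zero_le_one] at hv
      have hpos : 0 < modSq 1 v := (pow_pos hv.1 2).trans_le (sq_le_modSq hv.1.le hv.2)
      have hc : Tendsto (fun r : ℝ => modSq r v) (𝓝[<] 1) (𝓝 (modSq 1 v)) := by
        refine Tendsto.mono_left (Continuous.tendsto ?_ 1) nhdsWithin_le_nhds
        unfold modSq
        fun_prop
      exact (hc.log hpos.ne').const_mul _
  have hR : Tendsto (fun r : ℝ => -2 * ∑' k : ℕ, r ^ (k + 1) * fourierTerm k) (𝓝[<] 1)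
      (𝓝 (-2 * ∑' k : ℕ, fourierTerm k)) := by
    refine Tendsto.const_mul _ (tendsto_tsum_of_dominated_convergence
      (bound := fun k => |fourierTerm k|) fourierTerm_hasSum.summable.abs ?_ ?_)
    · intro k
      refine Tendsto.mono_left ?_ nhdsWithin_le_nhds
      have : Continuous fun r : ℝ => r ^ (k + 1) * fourierTerm k := by fun_prop
      simpa using this.tendsto 1
    · filter_upwards [hmem] with r hr k
      rw [norm_mul, Real.norm_of_nonneg (pow_nonneg hr.1 _), Real.norm_eq_abs]
      exact mul_le_of_le_one_left (abs_nonneg _) (pow_le_one₀ hr.1 hr.2.le)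
  rw [← fourierTerm_hasSum.tsum_eq]
  refine tendsto_nhds_unique hL (hR.congr' ?_)
  filter_upwards [hmem] with r hr using (integral_log_modSq hr.1 hr.2).symm

/-! ### Conclusion -/

theorem zeta_three_repr_beta :
    zetaR 3 = -(64 / (3 * π)) * betaR 4 + (8 * π ^ 2 / 9) *
      (4 / 3 - Real.log (π / 2) +
        3 * ∑' n : ℕ, zetaR (2 * (n + 1)) /
          (((n : ℝ) + 1) * (2 * ((n : ℝ) + 1) + 1) * (2 * ((n : ℝ) + 1) + 3) * 16 ^ (n + 1))) := by
  rw [zeta_series_eq_integral]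
  have hsplit : ∫ v in (0 : ℝ)..1, (1 - v ^ 2) * log (π * (v / 4) / sin (π * (v / 4))) =
      ∫ v in (0 : ℝ)..1, ((1 - v ^ 2) * (log (π / 2) + log v) -
        1 / 2 * ((1 - v ^ 2) * log (modSq 1 v))) := by
    refine intervalIntegral.integral_congr_uIoo fun v hv => ?_
    rw [Set.uIoo_of_le zero_le_one] at hv
    obtain ⟨hv0, hv1⟩ := hv
    have hsin : 0 < sin (π * (v / 4)) :=
      sin_pos_of_pos_of_lt_pi (by positivity) (by nlinarith [pi_pos])
    have hm : modSq 1 v = (2 * sin (π * (v / 4))) ^ 2 := by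
      rw [modSq, show π / 2 * v = 2 * (π * (v / 4)) by ring, cos_two_mul]
      nlinarith [sin_sq_add_cos_sq (π * (v / 4))]
    have hq : π * (v / 4) / sin (π * (v / 4)) = π / 2 * v / (2 * sin (π * (v / 4))) := by
      field_simp
      norm_num
    rw [hm, hq, log_pow, log_div (by positivity) (by positivity),
      log_mul (by positivity) hv0.ne']
    push_cast
    ring
  have hint : IntervalIntegrable (fun v : ℝ => (1 - v ^ 2) * (log (π / 2) + log v)) volume 0 1 :=
    (intervalIntegrable_const.add intervalIntegral.intervalIntegrable_log').continuousOn_mul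
      (by fun_prop)
  rw [hsplit, intervalIntegral.integral_sub hint (intervalIntegrable_weight_log.const_mul _),
    intervalIntegral.integral_const_mul, integral_mul_log, integral_log_modSq_one]
  field_simp
  ring
end
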